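/- Let d ≥ 3, 0 < r < 1, and 1 ≤ m ≤ d−1. There exists a constant C < ∞, depending only on d, m and r, such that for every C¹ function f : ℝ^{d−m} × ℝ^m → ℝ with compact support contained in B_{d−m} × B_m, every a ∈ ℝ, and every b ∈ ℝ∖{0}: |∫_{B_{d−m}} ∫_{B_m} f(x,y)/(a + ib − |x|² + |y|²) d^{d−m}x d^m y| ≤ C·‖f‖_{C¹}·(1 + a² + b²). -/

import Mathlib

open MeasureTheory Complex Real
open scoped ENNReal

noncomputable section

namespace LatSch

/-- The lattice `Γ = ℤ^d`. -/
abbrev Γd (d : ℕ) := Fin d → ℤ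

/-- The Hilbert space `ℓ²(Γ)`. -/
abbrev L2 (d : ℕ) := lp (fun _ : Γd d => ℂ) 2

/-- Euclidean norm of a lattice point. -/
def lnorm {d : ℕ} (x : Γd d) : ℝ := Real.sqrt (∑ i, ((x i : ℝ)) ^ 2)

/-- The standard basis vector `δ_x` of `ℓ²(Γ)`. -/
def delta {d : ℕ} (x : Γd d) : L2 d := lp.single 2 x 1

local notation "⟪" a ", " b "⟫" => @inner ℂ _ _ a b

/-- The cube `[-π, π]^d`, a fundamental domain of the torus. -/
def torusBox (d : ℕ) : Set (Fin d → ℝ) := Set.univ.pi fun _ => Set.Icc (-π) π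

/-- `⟨p, m⟩` for `p ∈ ℝ^d`, `m ∈ ℤ^d`. -/
def dotZ {d : ℕ} (p : Fin d → ℝ) (m : Γd d) : ℝ := ∑ i, p i * (m i : ℝ)

/-- Fourier coefficient `f̂(m) = (2π)^{-d} ∫_{[-π,π]^d} f(p) e^{i⟨p,m⟩} dp`. -/
def fCoeff {d : ℕ} (f : (Fin d → ℝ) → ℝ) (m : Γd d) : ℂ :=
  ((1 / (2 * π) ^ d : ℝ) : ℂ) *
    ∫ p in torusBox d, (f p : ℂ) * Complex.exp (Complex.I * (dotZ p m : ℝ))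

/-- `H` is the Fourier multiplier (hopping matrix) `h(f)`, characterized by its
matrix elements `⟨δ_x, H δ_y⟩ = f̂(x - y)`. -/
def IsMultiplier {d : ℕ} (f : (Fin d → ℝ) → ℝ) (H : L2 d →L[ℂ] L2 d) : Prop :=
  ∀ x y : Γd d, ⟪delta x, H (delta y)⟫ = fCoeff f (x - y)

/-- `M` is the operator of multiplication by the potential `V`. -/
def IsMulOp {d : ℕ} (V : Γd d → ℝ) (M : L2 d →L[ℂ] L2 d) : Prop :=
  ∀ (ψ : L2 d) (x : Γd d), (M ψ : ∀ _ : Γd d, ℂ) x = (V x : ℂ) * (ψ : ∀ _ : Γd d, ℂ) x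

/-- Partial derivative `∂_{p_k} f (p)`. -/
def pd {d : ℕ} (f : (Fin d → ℝ) → ℝ) (k : Fin d) (p : Fin d → ℝ) : ℝ :=
  fderiv ℝ f p (Pi.single k 1)

/-- `|∇f|²(p) = Σ_k (∂_{p_k} f(p))²`. -/
def gradSq {d : ℕ} (f : (Fin d → ℝ) → ℝ) (p : Fin d → ℝ) : ℝ := ∑ k, pd f k p ^ 2

/-- The Hessian matrix of `f` at `p`. -/
def hess {d : ℕ} (f : (Fin d → ℝ) → ℝ) (p : Fin d → ℝ) : Matrix (Fin d) (Fin d) ℝ :=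
  Matrix.of fun i j => fderiv ℝ (fun q => fderiv ℝ f q (Pi.single j 1)) p (Pi.single i 1)

/-- All critical points of `f` are nondegenerate (`f` is a Morse function). -/
def IsMorse {d : ℕ} (f : (Fin d → ℝ) → ℝ) : Prop :=
  ∀ p, fderiv ℝ f p = 0 → (hess f p).det ≠ 0

/-- `2πℤ^d`-periodicity. -/
def Periodic2pi {d : ℕ} (f : (Fin d → ℝ) → ℝ) : Prop :=
  ∀ (p : Fin d → ℝ) (m : Γd d), f (p + fun i => 2 * π * (m i : ℝ)) = f p

/-- A dispersion relation: a `2πℤ^d`-periodic function with minimum `0`. -/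
def IsDispersion {d : ℕ} (f : (Fin d → ℝ) → ℝ) : Prop :=
  Periodic2pi f ∧ (∀ p, 0 ≤ f p) ∧ (∃ p, f p = 0)

/-- Condition (M): `𝔢` and `|∇𝔢|²` are Morse functions. -/
def CondM {d : ℕ} (f : (Fin d → ℝ) → ℝ) : Prop := IsMorse f ∧ IsMorse (gradSq f)

/-- `Φ_{m,n}(V) = (Σ_x |V(x)|^{1/m} (1+|x|)^n)^m`, valued in `[0,∞]`. -/
def Phi {d : ℕ} (m n : ℕ) (V : Γd d → ℝ) : ℝ≥0∞ :=
  (∑' x : Γd d, ENNReal.ofReal (|V x| ^ ((1 : ℝ) / m) * (1 + lnorm x) ^ n)) ^ m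

/-- The set of eigenvectors of `H` (with real eigenvalue). -/
def eigvecs {d : ℕ} (H : L2 d →L[ℂ] L2 d) : Set (L2 d) :=
  {ψ : L2 d | ψ ≠ 0 ∧ ∃ μ : ℝ, H ψ = (μ : ℂ) • ψ}

/-- `N_pp[H]`: the Hilbert-space dimension of the closed linear span of all
eigenvectors of `H`. -/
def Npp {d : ℕ} (H : L2 d →L[ℂ] L2 d) : Cardinal :=
  Module.rank ℂ ((Submodule.span ℂ (eigvecs H)).topologicalClosure)

/-- The Fourier transform `ĝ_x(p) = (i/2·|∇𝔢(p)|² + ⟨∇𝔢(p), x⟩) e^{-i⟨p,x⟩}`. -/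
def ghat {d : ℕ} (e : (Fin d → ℝ) → ℝ) (x : Γd d) (p : Fin d → ℝ) : ℂ :=
  ((Complex.I / 2) * ((gradSq e p : ℝ) : ℂ) + ((∑ k, pd e k p * (x k : ℝ) : ℝ) : ℂ)) *
    Complex.exp (-(Complex.I * (dotZ p x : ℝ)))

/-- `g : Γ → ℓ²(Γ)` is the family of vectors `g_x` with Fourier transform `ĝ_x`. -/
def IsGVec {d : ℕ} (e : (Fin d → ℝ) → ℝ) (g : Γd d → L2 d) : Prop :=
  ∀ x m : Γd d,
    (g x : ∀ _ : Γd d, ℂ) m =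
      ((1 / (2 * π) ^ d : ℝ) : ℂ) *
        ∫ p in torusBox d, ghat e x p * Complex.exp (Complex.I * (dotZ p m : ℝ))

/-- `C` is the bounded self-adjoint realization
`C_V = Σ_x i V(x) (|δ_x⟩⟨g_x| - |g_x⟩⟨δ_x|)` of the commutator `i[V, A(𝔢)]`. -/
def IsCommOp {d : ℕ} (V : Γd d → ℝ) (g : Γd d → L2 d) (C : L2 d →L[ℂ] L2 d) : Prop :=
  ∀ ψ : L2 d,
    HasSum (fun x : Γd d =>
      (Complex.I * (V x : ℂ)) • (⟪g x, ψ⟫ • delta x - ⟪delta x, ψ⟫ • g x)) (C ψ)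

/-- `R` is the resolvent `(z - H)^{-1}`. -/
def IsResolventAt {d : ℕ} (H : L2 d →L[ℂ] L2 d) (z : ℂ) (R : L2 d →L[ℂ] L2 d) : Prop :=
  R.comp (z • (1 : L2 d →L[ℂ] L2 d) - H) = 1 ∧ (z • (1 : L2 d →L[ℂ] L2 d) - H).comp R = 1

/-- `‖f‖_{C^m} ≤ C`: all partial derivatives of order `≤ m` are bounded by `C`. -/
def CmNormLe {d : ℕ} (m : ℕ) (f : (Fin d → ℝ) → ℝ) (C : ℝ) : Prop :=
  ∀ j : ℕ, j ≤ m → ∀ (p : Fin d → ℝ) (k : Fin j → Fin d),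
    |iteratedFDeriv ℝ j f p (fun i => Pi.single (k i) 1)| ≤ C

/-- `K(𝔢) ≥ K`: at every critical point, every eigenvalue `λ` of the Hessian
satisfies `|λ|^{1/2} ≥ K`. -/
def MinCurvGe {d : ℕ} (f : (Fin d → ℝ) → ℝ) (K : ℝ) : Prop :=
  ∀ p, fderiv ℝ f p = 0 → ∀ (lam : ℝ) (v : Fin d → ℝ), v ≠ 0 →
    (hess f p).mulVec v = lam • v → K ^ 2 ≤ |lam|

/-- The set of thresholds `Thr(𝔢) = 𝔢(Crit(𝔢))`. -/
def Thr {d : ℕ} (f : (Fin d → ℝ) → ℝ) : Set ℝ := f '' {p | fderiv ℝ f p = 0}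


/-- The number of strictly negative eigenvalues of `C`, counted with multiplicity:
the dimension of the span of eigenvectors with strictly negative eigenvalue. -/
def NegCount {d : ℕ} (C : L2 d →L[ℂ] L2 d) : Cardinal :=
  Module.rank ℂ (Submodule.span ℂ
    {ψ : L2 d | ψ ≠ 0 ∧ ∃ μ : ℝ, μ < 0 ∧ C ψ = (μ : ℂ) • ψ})

/-- The number of strictly positive eigenvalues of `C`, counted with multiplicity. -/
def PosCount {d : ℕ} (C : L2 d →L[ℂ] L2 d) : Cardinal :=
  Module.rank ℂ (Submodule.span ℂ
    {ψ : L2 d | ψ ≠ 0 ∧ ∃ μ : ℝ, 0 < μ ∧ C ψ = (μ : ℂ) • ψ})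

/-!
One of the two factors has dimension `n ≥ 2`; by the symmetry exchanging the factors together with
`z ↦ -z`, where `z = a + ib`, it is the one containing `x`. In polar coordinates the inner integral
over `x` becomes, along each ray, the integral of `t ^ (n - 1) * f(t • v, y) / (w - t ^ 2)` with
`w = z + |y| ^ 2`. Since `n ≥ 2`, one factor `t` can be paired with the denominator, and
`t / (w - t ^ 2)` has the antiderivative `-log (w - t ^ 2) / 2`. Integrating by parts leaves only
logarithms: an interior term bounded uniformly for bounded `w`, because
`|w - t ^ 2| ≥ (t - √|Re w|) ^ 2`, and a boundary term `log w` at `t = 0`. The same inequality shows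
that the integral of `|log |z + |y| ^ 2||` over `y` is bounded uniformly for bounded `z`. On the
product of the balls of radius `R`, the denominator has modulus at least `1` if `|z| ≥ 1 + R ^ 2`.
-/

open Metric Set Module

section Logarithm

theorem norm_log_le_abs_log_norm_add_pi (w : ℂ) : ‖Complex.log w‖ ≤ |Real.log ‖w‖| + π := by
  refine (norm_le_abs_re_add_abs_im _).trans ?_
  rw [log_re, log_im]
  gcongr
  exact abs_arg_le_pi w

theorem integrable_posLog_inv : Integrable fun u : ℝ => log⁺ u⁻¹ := by
  have hlog : IntegrableOn Real.log (Icc (-1) 1) := by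
    rw [← intervalIntegrable_iff_integrableOn_Icc_of_le (by norm_num)]
    exact intervalIntegral.intervalIntegrable_log'
  have hsupp : Function.support (fun u : ℝ => log⁺ u⁻¹) ⊆ Icc (-1) 1 := by
    refine fun u hu => abs_le.1 ?_
    rw [Function.mem_support, Ne, posLog_eq_zero_iff, abs_inv, not_le] at hu
    exact ((one_lt_inv_iff₀.1 hu).2).le
  refine (integrableOn_iff_integrable_of_support_subset hsupp).1 (hlog.abs.mono' ?_ ?_)
  · exact (continuous_posLog.measurable.comp measurable_inv).aestronglyMeasurable
  · refine .of_forall fun u => ?_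
    rw [norm_of_nonneg posLog_nonneg, posLog_apply, Real.log_inv]
    exact max_le (abs_nonneg _) (neg_le_abs _)

theorem sq_sub_sqrt_le_norm_sub_sq (w : ℂ) {t : ℝ} (ht : 0 ≤ t) :
    (t - √|w.re|) ^ 2 ≤ ‖w - (t : ℂ) ^ 2‖ := by
  have hre : |w.re - t ^ 2| ≤ ‖w - (t : ℂ) ^ 2‖ := by
    have := abs_re_le_norm (w - (t : ℂ) ^ 2)
    rwa [sub_re, ← ofReal_pow, ofReal_re, ofReal_pow] at this
  refine le_trans ?_ hre
  set s := √|w.re|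
  have hs0 : 0 ≤ s := sqrt_nonneg _
  have hs : s ^ 2 = |w.re| := sq_sqrt (abs_nonneg _)
  rcases le_total w.re 0 with hneg | hpos
  · rw [abs_of_nonpos hneg] at hs
    calc (t - s) ^ 2 ≤ -(w.re - t ^ 2) := by nlinarith
      _ ≤ |w.re - t ^ 2| := neg_le_abs _
  · rw [abs_of_nonneg hpos] at hs
    calc (t - s) ^ 2 = |t - s| * |t - s| := by rw [abs_mul_abs_self, sq]
      _ ≤ |t - s| * |t + s| := by
          gcongr |t - s| * ?_
          exact (abs_sub_le_iff.2 ⟨by linarith, by linarith⟩).trans (le_abs_self _)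
      _ = |w.re - t ^ 2| := by
          rw [← abs_mul, ← hs, abs_sub_comm (s ^ 2)]
          ring_nf

theorem abs_log_norm_sub_sq_le (w : ℂ) {t : ℝ} (ht : 0 ≤ t) (hts : t ≠ √|w.re|) :
    |Real.log ‖w - (t : ℂ) ^ 2‖| ≤ ‖w‖ + t ^ 2 + 2 * log⁺ (t - √|w.re|)⁻¹ := by
  set x := ‖w - (t : ℂ) ^ 2‖
  have hx : x ≤ ‖w‖ + t ^ 2 :=
    (norm_sub_le _ _).trans_eq (by rw [norm_pow, Complex.norm_of_nonneg ht])
  have hsq : 0 < (t - √|w.re|) ^ 2 := by positivity [sub_ne_zero.2 hts]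
  have hsqx := sq_sub_sqrt_le_norm_sub_sq w ht
  have hx0 : 0 < x := hsq.trans_le hsqx
  have hupper : log⁺ x ≤ ‖w‖ + t ^ 2 := by
    refine max_le (by positivity) ?_
    linarith [log_le_sub_one_of_pos hx0]
  have hlower : log⁺ x⁻¹ ≤ 2 * log⁺ (t - √|w.re|)⁻¹ := by
    calc log⁺ x⁻¹ ≤ log⁺ ((t - √|w.re|) ^ 2)⁻¹ :=
          posLog_le_posLog (by positivity) (inv_anti₀ hsq hsqx)
      _ = 2 * log⁺ (t - √|w.re|)⁻¹ := by rw [← inv_pow, posLog_pow, Nat.cast_ofNat]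
  rw [← posLog_sub_posLog_inv]
  have := posLog_nonneg (x := x)
  have := posLog_nonneg (x := x⁻¹)
  exact abs_le.2 ⟨by linarith, by linarith⟩

theorem integral_abs_log_norm_sub_sq_le (w : ℂ) {R : ℝ} (hR : 0 ≤ R) :
    ∫ t in 0..R, |Real.log ‖w - (t : ℂ) ^ 2‖| ≤
      R * (‖w‖ + R ^ 2) + 2 * ∫ u : ℝ, log⁺ u⁻¹ := by
  set s := √|w.re|
  have hpos : Integrable fun t : ℝ => log⁺ (t - s)⁻¹ := integrable_posLog_inv.comp_sub_right s
  have hconst : IntegrableOn (fun _ : ℝ => ‖w‖ + R ^ 2) (Ioc 0 R) := integrableOn_const (by simp)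
  have hle : ∀ᵐ t : ℝ ∂volume.restrict (Ioc 0 R),
      |Real.log ‖w - (t : ℂ) ^ 2‖| ≤ ‖w‖ + R ^ 2 + 2 * log⁺ (t - s)⁻¹ := by
    filter_upwards [ae_restrict_mem measurableSet_Ioc,
      ae_restrict_of_ae (Measure.ae_ne volume s)] with t ht hts
    have htR : t ^ 2 ≤ R ^ 2 := pow_le_pow_left₀ ht.1.le ht.2 2
    linarith [abs_log_norm_sub_sq_le w ht.1.le hts]
  rw [intervalIntegral.integral_of_le hR]
  calc ∫ t in Ioc 0 R, |Real.log ‖w - (t : ℂ) ^ 2‖|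
      ≤ ∫ t in Ioc 0 R, (‖w‖ + R ^ 2 + 2 * log⁺ (t - s)⁻¹) :=
        integral_mono_of_nonneg (.of_forall fun _ => abs_nonneg _)
          (Integrable.add hconst (hpos.const_mul 2).integrableOn) hle
    _ = R * (‖w‖ + R ^ 2) + 2 * ∫ t in Ioc 0 R, log⁺ (t - s)⁻¹ := by
        rw [integral_add hconst (hpos.const_mul 2).integrableOn, integral_const_mul]
        simp [hR]
    _ ≤ R * (‖w‖ + R ^ 2) + 2 * ∫ t, log⁺ (t - s)⁻¹ := by
        linarith [setIntegral_le_integral (s := Ioc 0 R) hpos (.of_forall fun _ => posLog_nonneg)]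
    _ = R * (‖w‖ + R ^ 2) + 2 * ∫ u : ℝ, log⁺ u⁻¹ := by
        rw [integral_sub_right_eq_self (fun u : ℝ => log⁺ u⁻¹) s]

end Logarithm

section RadialIntegral

variable {w : ℂ} {R : ℝ}

theorem sub_sq_mem_slitPlane (hw : w.im ≠ 0) (t : ℝ) : w - (t : ℂ) ^ 2 ∈ slitPlane :=
  .inr (by simpa [← ofReal_pow] using hw)

theorem hasDerivAt_log_sub_sq (hw : w.im ≠ 0) (t : ℝ) :
    HasDerivAt (fun t : ℝ => Complex.log (w - (t : ℂ) ^ 2)) (-(2 * t) / (w - (t : ℂ) ^ 2)) t := by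
  have hsq : HasDerivAt (fun t : ℝ => w - (t : ℂ) ^ 2) (-(2 * t : ℂ)) t := by
    simpa using ((hasDerivAt_id t).ofReal_comp.pow 2).const_sub w
  exact hsq.clog_real (sub_sq_mem_slitPlane hw t)

theorem continuous_log_sub_sq (hw : w.im ≠ 0) :
    Continuous fun t : ℝ => Complex.log (w - (t : ℂ) ^ 2) :=
  continuous_iff_continuousAt.2 fun t => (hasDerivAt_log_sub_sq hw t).continuousAt

theorem continuous_log_norm_sub_sq (hw : w.im ≠ 0) :
    Continuous fun t : ℝ => Real.log ‖w - (t : ℂ) ^ 2‖ := by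
  simpa only [Function.comp_def, log_re] using continuous_re.comp (continuous_log_sub_sq hw)

variable {u u' : ℝ → ℂ}

theorem integral_mul_div_sub_sq_eq (hu : ∀ t, HasDerivAt u (u' t) t) (hu' : Continuous u')
    (huR : u R = 0) (hw : w.im ≠ 0) :
    ∫ t in 0..R, t * u t / (w - (t : ℂ) ^ 2) =
      (u 0 * Complex.log w + ∫ t in 0..R, u' t * Complex.log (w - (t : ℂ) ^ 2)) / 2 := by
  have hdiv : Continuous fun t : ℝ => -(2 * t : ℂ) / (w - (t : ℂ) ^ 2) :=
    .div (by fun_prop) (by fun_prop) fun t => slitPlane_ne_zero (sub_sq_mem_slitPlane hw t)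
  have hparts := intervalIntegral.integral_mul_deriv_eq_deriv_mul (a := 0) (b := R)
    (fun t _ => hu t) (fun t _ => hasDerivAt_log_sub_sq hw t)
    (hu'.intervalIntegrable _ _) (hdiv.intervalIntegrable _ _)
  have hintegrand (t : ℝ) :
      t * u t / (w - (t : ℂ) ^ 2) = -(1 / 2) * (u t * (-(2 * t) / (w - (t : ℂ) ^ 2))) := by ring
  simp only [hintegrand, intervalIntegral.integral_const_mul]
  rw [hparts, huR, ofReal_zero, zero_pow two_ne_zero, sub_zero]
  ring

theorem norm_integral_mul_div_sub_sq_le (hR : 0 ≤ R) (hu : ∀ t, HasDerivAt u (u' t) t)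
    (hu' : Continuous u') (huR : u R = 0) {D : ℝ} (hD : ∀ t ∈ Icc 0 R, ‖u' t‖ ≤ D)
    (hw : w.im ≠ 0) :
    ‖∫ t in 0..R, t * u t / (w - (t : ℂ) ^ 2)‖ ≤
      (‖u 0‖ * (|Real.log ‖w‖| + π) +
        D * (R * (‖w‖ + R ^ 2 + π) + 2 * ∫ v : ℝ, log⁺ v⁻¹)) / 2 := by
  have hD0 : 0 ≤ D := (norm_nonneg _).trans (hD 0 ⟨le_rfl, hR⟩)
  have hcont : Continuous fun t : ℝ => |Real.log ‖w - (t : ℂ) ^ 2‖| :=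
    (continuous_log_norm_sub_sq hw).abs
  have hboundary : ‖u 0 * Complex.log w‖ ≤ ‖u 0‖ * (|Real.log ‖w‖| + π) := by
    rw [norm_mul]
    gcongr
    exact norm_log_le_abs_log_norm_add_pi w
  have hinterior : ‖∫ t in 0..R, u' t * Complex.log (w - (t : ℂ) ^ 2)‖ ≤
      D * (R * (‖w‖ + R ^ 2 + π) + 2 * ∫ u : ℝ, log⁺ u⁻¹) :=
    calc ‖∫ t in 0..R, u' t * Complex.log (w - (t : ℂ) ^ 2)‖
        ≤ ∫ t in 0..R, D * (|Real.log ‖w - (t : ℂ) ^ 2‖| + π) := by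
          refine intervalIntegral.norm_integral_le_of_norm_le hR (.of_forall fun t ht => ?_)
            (Continuous.intervalIntegrable (by fun_prop) _ _)
          rw [norm_mul]
          exact mul_le_mul (hD t ⟨ht.1.le, ht.2⟩) (norm_log_le_abs_log_norm_add_pi _)
            (norm_nonneg _) hD0
      _ = D * ((∫ t in 0..R, |Real.log ‖w - (t : ℂ) ^ 2‖|) + R * π) := by
          rw [intervalIntegral.integral_const_mul,
            intervalIntegral.integral_add (hcont.intervalIntegrable _ _) intervalIntegrable_const]
          simp
      _ ≤ D * (R * (‖w‖ + R ^ 2 + π) + 2 * ∫ u : ℝ, log⁺ u⁻¹) := by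
          refine mul_le_mul_of_nonneg_left ?_ hD0
          linarith [integral_abs_log_norm_sub_sq_le w hR]
  rw [integral_mul_div_sub_sq_eq hu hu' huR hw, norm_div, RCLike.norm_ofNat]
  gcongr
  exact (norm_add_le _ _).trans (add_le_add hboundary hinterior)

end RadialIntegral

section PolarCoordinates

variable {E V : Type*} [NormedAddCommGroup E] [NormedSpace ℝ E] [FiniteDimensional ℝ E]
  [Nontrivial E] [MeasurableSpace E] [BorelSpace E] [NormedAddCommGroup V] [NormedSpace ℝ V]
  (μ : Measure E) [μ.IsAddHaarMeasure]

theorem integral_volumeIoiPow (k : ℕ) (g : ℝ → V) :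
    ∫ t, g t ∂.volumeIoiPow k = ∫ t in Ioi (0 : ℝ), t ^ k • g t := by
  have hmeas : Measurable fun t : Ioi (0 : ℝ) => (t.1 ^ k).toNNReal :=
    (measurable_subtype_coe.pow_const k).real_toNNReal
  simp only [Measure.volumeIoiPow, ENNReal.ofReal]
  rw [integral_withDensity_eq_integral_smul hmeas,
    integral_subtype_comap measurableSet_Ioi fun t => (t ^ k).toNNReal • g t]
  refine setIntegral_congr_fun measurableSet_Ioi fun t ht => ?_
  rw [NNReal.smul_def, coe_toNNReal _ (pow_nonneg (le_of_lt ht) k)]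

theorem integral_eq_integral_toSphere_integral_Ioi {g : E → V} (hg : Integrable g μ) :
    ∫ x, g x ∂μ =
      ∫ v, ∫ t in Ioi (0 : ℝ), t ^ (finrank ℝ E - 1) • g (t • v.1) ∂volume ∂μ.toSphere := by
  set polar := homeomorphUnitSphereProd E
  have hpolar := μ.measurePreserving_homeomorphUnitSphereProd
  have hemb : MeasurableEmbedding polar := polar.measurableEmbedding
  have hsub (x : ({0}ᶜ : Set E)) : g ((polar x).2.1 • (polar x).1.1) = g x := by
    simp [polar, smul_smul, norm_ne_zero_iff.2 x.2]
  have hint : Integrable (fun p : sphere (0 : E) 1 × Ioi (0 : ℝ) => g (p.2.1 • p.1.1))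
      (μ.toSphere.prod (.volumeIoiPow (finrank ℝ E - 1))) := by
    rw [← hpolar.integrable_comp_emb hemb]
    refine ((integrableOn_iff_comap_subtypeVal (measurableSet_singleton 0).compl).1
      hg.integrableOn).congr (.of_forall fun x => (hsub x).symm)
  calc ∫ x, g x ∂μ = ∫ x : ({0}ᶜ : Set E), g x ∂μ.comap (↑) := by
        rw [integral_subtype_comap (measurableSet_singleton _).compl, restrict_compl_singleton]
    _ = ∫ p, g (p.2.1 • p.1.1) ∂μ.toSphere.prod (.volumeIoiPow (finrank ℝ E - 1)) := by
        rw [← hpolar.integral_comp hemb]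
        exact integral_congr_ae (.of_forall fun x => (hsub x).symm)
    _ = ∫ v, ∫ t in Ioi (0 : ℝ), t ^ (finrank ℝ E - 1) • g (t • v.1) ∂volume ∂μ.toSphere := by
        rw [integral_prod _ hint]
        exact integral_congr_ae (.of_forall fun v => integral_volumeIoiPow _ fun t => g (t • v.1))

theorem norm_integral_le_toSphere_of_forall_ray {g : E → V} (hg : Integrable g μ) {B : ℝ}
    (hB : ∀ v : E, ‖v‖ = 1 → ‖∫ t in Ioi (0 : ℝ), t ^ (finrank ℝ E - 1) • g (t • v)‖ ≤ B) :
    ‖∫ x, g x ∂μ‖ ≤ B * μ.toSphere.real univ := by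
  rw [integral_eq_integral_toSphere_integral_Ioi μ hg]
  exact norm_integral_le_of_norm_le_const (.of_forall fun v => hB v (by simp))

theorem setIntegral_ball_fun_norm (g : ℝ → V) (R : ℝ) :
    ∫ x in ball (0 : E) R, g ‖x‖ ∂μ =
      finrank ℝ E • μ.real (ball 0 1) • ∫ t in Ioo 0 R, t ^ (finrank ℝ E - 1) • g t := by
  have hball : ∫ x in ball (0 : E) R, g ‖x‖ ∂μ = ∫ x, (Iio R).indicator g ‖x‖ ∂μ := by
    rw [← integral_indicator measurableSet_ball]
    exact integral_congr_ae (.of_forall fun x => by simp [indicator])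
  have hray : ∫ t in Ioi (0 : ℝ), t ^ (finrank ℝ E - 1) • (Iio R).indicator g t =
      ∫ t in Ioo 0 R, t ^ (finrank ℝ E - 1) • g t := by
    rw [← Ioi_inter_Iio, ← setIntegral_indicator measurableSet_Iio]
    simp only [indicator_smul]
  rw [hball, integral_fun_norm_addHaar, hray]

end PolarCoordinates

section LogPotential

variable {F : Type*} [NormedAddCommGroup F] [NormedSpace ℝ F] [FiniteDimensional ℝ F]
  [MeasurableSpace F] [BorelSpace F] (ν : Measure F) {z : ℂ}

theorem integrableOn_ball_abs_log_norm_add_norm_sq [IsFiniteMeasureOnCompacts ν] (hz : z.im ≠ 0)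
    (R : ℝ) : IntegrableOn (fun y => |Real.log ‖z + (‖y‖ : ℂ) ^ 2‖|) (ball (0 : F) R) ν := by
  have hne (y : F) : ‖z + (‖y‖ : ℂ) ^ 2‖ ≠ 0 := fun h => hz <| by
    simpa [← ofReal_pow] using congrArg Complex.im (norm_eq_zero.1 h)
  have hcont : Continuous fun y : F => |Real.log ‖z + (‖y‖ : ℂ) ^ 2‖| :=
    (Continuous.log (by fun_prop) hne).abs
  exact (hcont.locallyIntegrable.integrableOn_isCompact (isCompact_closedBall 0 R)).mono_set
    ball_subset_closedBall

theorem setIntegral_ball_abs_log_norm_add_norm_sq_le [Nontrivial F] [ν.IsAddHaarMeasure]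
    (hz : z.im ≠ 0) {R : ℝ} (hR : 0 ≤ R) :
    ∫ y in ball (0 : F) R, |Real.log ‖z + (‖y‖ : ℂ) ^ 2‖| ∂ν ≤
      finrank ℝ F * ν.real (ball 0 1) * R ^ (finrank ℝ F - 1) *
        (R * (‖z‖ + R ^ 2) + 2 * ∫ u : ℝ, log⁺ u⁻¹) := by
  have hneg (t : ℝ) : ‖z + (t : ℂ) ^ 2‖ = ‖-z - (t : ℂ) ^ 2‖ := by
    rw [← norm_neg, neg_add']
  have hcont : Continuous fun t : ℝ => |Real.log ‖-z - (t : ℂ) ^ 2‖| :=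
    (continuous_log_norm_sub_sq (by simpa using hz)).abs
  have hray : ∫ t in Ioo 0 R, t ^ (finrank ℝ F - 1) • |Real.log ‖-z - (t : ℂ) ^ 2‖| ≤
      R ^ (finrank ℝ F - 1) * (R * (‖z‖ + R ^ 2) + 2 * ∫ u : ℝ, log⁺ u⁻¹) :=
    calc ∫ t in Ioo 0 R, t ^ (finrank ℝ F - 1) • |Real.log ‖-z - (t : ℂ) ^ 2‖|
        = ∫ t in 0..R, t ^ (finrank ℝ F - 1) * |Real.log ‖-z - (t : ℂ) ^ 2‖| := by
          simp only [smul_eq_mul, intervalIntegral.integral_of_le hR, integral_Ioc_eq_integral_Ioo]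
      _ ≤ ∫ t in 0..R, R ^ (finrank ℝ F - 1) * |Real.log ‖-z - (t : ℂ) ^ 2‖| := by
          refine intervalIntegral.integral_mono_on hR
            (Continuous.intervalIntegrable (by fun_prop) _ _)
            (Continuous.intervalIntegrable (by fun_prop) _ _) fun t ht => ?_
          gcongr
          exacts [ht.1, ht.2]
      _ ≤ R ^ (finrank ℝ F - 1) * (R * (‖z‖ + R ^ 2) + 2 * ∫ u : ℝ, log⁺ u⁻¹) := by
          rw [intervalIntegral.integral_const_mul, ← norm_neg z]
          gcongr
          exact integral_abs_log_norm_sub_sq_le (-z) hR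
  simp only [hneg]
  rw [setIntegral_ball_fun_norm ν fun t => |Real.log ‖-z - (t : ℂ) ^ 2‖|, nsmul_eq_mul,
    smul_eq_mul, ← mul_assoc, mul_assoc _ (R ^ _)]
  gcongr

end LogPotential

/-- `h` is a `C¹` bump of radius `R` and size `M`: it vanishes off the ball of radius `R` about the
origin, and `M` bounds both its values and the operator norm of its derivative. The latter replaces
the supremum of the partial derivatives, so that no coordinates are needed. -/
structure IsC1Bump {E : Type*} [NormedAddCommGroup E] [NormedSpace ℝ E] (R M : ℝ) (h : E → ℝ) :
    Prop where
  contDiff : ContDiff ℝ 1 h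
  support_subset : Function.support h ⊆ ball 0 R
  abs_le (x : E) : |h x| ≤ M
  norm_fderiv_le (x : E) : ‖fderiv ℝ h x‖ ≤ M

namespace IsC1Bump

section Basic

variable {E F : Type*} [NormedAddCommGroup E] [NormedSpace ℝ E] [NormedAddCommGroup F]
  [NormedSpace ℝ F] {R M : ℝ} {h : E → ℝ} {f : E × F → ℝ}

theorem nonneg (hh : IsC1Bump R M h) : 0 ≤ M := (abs_nonneg _).trans (hh.abs_le 0)

theorem eq_zero (hh : IsC1Bump R M h) {x : E} (hx : R ≤ ‖x‖) : h x = 0 :=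
  Function.notMem_support.1 fun hmem => hx.not_gt (mem_ball_zero_iff.1 (hh.support_subset hmem))

theorem comp_of_norm_le (hf : IsC1Bump R M h) {g : F → E} {L : F →L[ℝ] E}
    (hL : ‖L‖ ≤ 1) (hg : ∀ x, HasFDerivAt g L x) (hgnorm : ∀ x, ‖x‖ ≤ ‖g x‖) :
    IsC1Bump R M (h ∘ g) where
  contDiff := hf.contDiff.comp (contDiff_one_iff_hasFDerivAt.2 ⟨_, continuous_const, hg⟩)
  support_subset x hx := by
    have := hf.support_subset hx
    rw [mem_ball_zero_iff] at this ⊢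
    exact (hgnorm x).trans_lt this
  abs_le x := hf.abs_le (g x)
  norm_fderiv_le x := by
    have hderiv := (hf.contDiff.differentiable one_ne_zero (g x)).hasFDerivAt.comp x (hg x)
    rw [hderiv.fderiv]
    exact (ContinuousLinearMap.opNorm_comp_le _ _).trans
      ((mul_le_of_le_one_right (norm_nonneg _) hL).trans (hf.norm_fderiv_le _))

theorem slice (hf : IsC1Bump R M f) (y : F) : IsC1Bump R M fun x => f (x, y) :=
  hf.comp_of_norm_le (ContinuousLinearMap.norm_inl_le_one ℝ E F)
    (fun x => hasFDerivAt_prodMk_left x y) fun x => le_max_left ‖x‖ ‖y‖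

theorem swap (hf : IsC1Bump R M f) : IsC1Bump R M fun q : F × E => f q.swap :=
  hf.comp_of_norm_le (L := (ContinuousLinearEquiv.prodComm ℝ F E : F × E →L[ℝ] E × F))
    (ContinuousLinearMap.opNorm_le_bound _ zero_le_one fun q => by simp [Prod.norm_def, max_comm])
    (fun q => (ContinuousLinearEquiv.prodComm ℝ F E).hasFDerivAt)
    fun q => by simp [Prod.norm_def, max_comm]

theorem integrable_div [FiniteDimensional ℝ E] [MeasurableSpace E] [BorelSpace E]
    (μ : Measure E) [IsFiniteMeasureOnCompacts μ] (hh : IsC1Bump R M h) {g : E → ℂ}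
    (hg : Continuous g) (hg0 : ∀ x, g x ≠ 0) : Integrable (fun x => h x / g x) μ := by
  have hcont : Continuous fun x => (h x : ℂ) / g x :=
    (continuous_ofReal.comp hh.contDiff.continuous).div hg hg0
  refine hcont.integrable_of_hasCompactSupport (.intro (isCompact_closedBall 0 R) fun x hx => ?_)
  rw [mem_closedBall_zero_iff, not_le] at hx
  rw [hh.eq_zero hx.le, ofReal_zero, zero_div]

end Basic

section Elliptic

variable {E : Type*} [NormedAddCommGroup E] [NormedSpace ℝ E] {R M : ℝ} {h : E → ℝ} {w : ℂ}

theorem hasDerivAt_pow_mul_ray (hh : IsC1Bump R M h) (k : ℕ) (v : E) (t : ℝ) :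
    HasDerivAt (fun t : ℝ => t ^ k * h (t • v))
      (k * t ^ (k - 1) * h (t • v) + t ^ k * fderiv ℝ h (t • v) v) t := by
  have hray : HasDerivAt (fun t : ℝ => t • v) v t := by
    simpa only [id, one_smul] using (hasDerivAt_id t).smul_const v
  exact (hasDerivAt_pow k t).mul
    ((hh.contDiff.differentiable one_ne_zero _).hasFDerivAt.comp_hasDerivAt t hray)

theorem abs_deriv_pow_mul_ray_le (hh : IsC1Bump R M h) (k : ℕ) {v : E} (hv : ‖v‖ = 1) {t : ℝ}
    (ht : t ∈ Icc 0 R) :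
    |k * t ^ (k - 1) * h (t • v) + t ^ k * fderiv ℝ h (t • v) v| ≤
      (k * R ^ (k - 1) + R ^ k) * M := by
  have hfderiv : |fderiv ℝ h (t • v) v| ≤ M := by
    simpa [hv] using (fderiv ℝ h (t • v)).le_of_opNorm_le (hh.norm_fderiv_le _) v
  have hpow (j : ℕ) : |t ^ j| ≤ R ^ j := by
    rw [abs_pow, abs_of_nonneg ht.1]
    exact pow_le_pow_left₀ ht.1 ht.2 j
  have := hh.nonneg
  have hR : 0 ≤ R := ht.1.trans ht.2
  calc _ ≤ |k * t ^ (k - 1) * h (t • v)| + |t ^ k * fderiv ℝ h (t • v) v| := abs_add_le _ _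
    _ = k * |t ^ (k - 1)| * |h (t • v)| + |t ^ k| * |fderiv ℝ h (t • v) v| := by
        simp only [abs_mul, Nat.abs_cast]
    _ ≤ k * R ^ (k - 1) * M + R ^ k * M := by
        gcongr
        exacts [hpow _, hh.abs_le _, hpow _]
    _ = (k * R ^ (k - 1) + R ^ k) * M := by ring

theorem integral_ray_eq (hh : IsC1Bump R M h) (hR : 0 ≤ R) (k : ℕ) {v : E} (hv : ‖v‖ = 1) :
    ∫ t in Ioi (0 : ℝ), t ^ (k + 1) • ((h (t • v) : ℂ) / (w - (‖t • v‖ : ℂ) ^ 2)) =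
      ∫ t in 0..R, t * ((t ^ k * h (t • v) : ℝ) : ℂ) / (w - (t : ℂ) ^ 2) := by
  have hnorm {t : ℝ} (ht : 0 < t) : ‖t • v‖ = t := by
    rw [norm_smul, hv, mul_one, norm_of_nonneg ht.le]
  have hvanish : ∀ t ∈ Ioi 0 \ Ioc 0 R,
      t ^ (k + 1) • ((h (t • v) : ℂ) / (w - (‖t • v‖ : ℂ) ^ 2)) = 0 := by
    intro t ⟨ht, htR⟩
    have hRt : R ≤ ‖t • v‖ := by
      rw [hnorm ht]
      exact (not_le.1 fun h => htR ⟨ht, h⟩).le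
    rw [hh.eq_zero hRt, ofReal_zero, zero_div, smul_zero]
  rw [intervalIntegral.integral_of_le hR, setIntegral_eq_of_subset_of_forall_sdiff_eq_zero
    measurableSet_Ioi Ioc_subset_Ioi_self hvanish]
  refine setIntegral_congr_fun measurableSet_Ioc fun t ht => ?_
  simp only [hnorm ht.1, real_smul, ofReal_mul, ofReal_pow]
  ring

theorem norm_integral_ray_le (hh : IsC1Bump R M h) (hR : 0 ≤ R) (k : ℕ) {v : E} (hv : ‖v‖ = 1)
    (hw : w.im ≠ 0) :
    ‖∫ t in Ioi (0 : ℝ), t ^ (k + 1) • ((h (t • v) : ℂ) / (w - (‖t • v‖ : ℂ) ^ 2))‖ ≤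
      (M * (|Real.log ‖w‖| + π) + (k * R ^ (k - 1) + R ^ k) * M *
        (R * (‖w‖ + R ^ 2 + π) + 2 * ∫ u : ℝ, log⁺ u⁻¹)) / 2 := by
  have hcont : Continuous fun t : ℝ =>
      k * t ^ (k - 1) * h (t • v) + t ^ k * fderiv ℝ h (t • v) v := by
    have := hh.contDiff.continuous
    have := hh.contDiff.continuous_fderiv one_ne_zero
    fun_prop
  have hend : h (R • v) = 0 := hh.eq_zero (by rw [norm_smul, hv, mul_one, norm_of_nonneg hR])
  have horigin : ‖((0 ^ k * h ((0 : ℝ) • v) : ℝ) : ℂ)‖ ≤ M := by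
    rw [Complex.norm_real, norm_eq_abs, abs_mul, abs_pow, abs_zero]
    exact (mul_le_of_le_one_left (abs_nonneg _) (pow_le_one₀ le_rfl zero_le_one)).trans
      (hh.abs_le _)
  rw [hh.integral_ray_eq hR k hv]
  refine (norm_integral_mul_div_sub_sq_le hR
    (fun t => (hh.hasDerivAt_pow_mul_ray k v t).ofReal_comp) (continuous_ofReal.comp hcont)
    (by rw [hend, mul_zero, ofReal_zero])
    (fun t ht => (Complex.norm_real _).trans_le (hh.abs_deriv_pow_mul_ray_le k hv ht)) hw).trans ?_
  gcongr

variable [FiniteDimensional ℝ E] [MeasurableSpace E] [BorelSpace E]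

theorem exists_norm_integral_div_sub_norm_sq_le (μ : Measure E) [μ.IsAddHaarMeasure]
    (hE : 2 ≤ finrank ℝ E) (hR : 0 ≤ R) (K : ℝ) :
    ∃ C, ∀ {h : E → ℝ} {M : ℝ} {w : ℂ}, IsC1Bump R M h → w.im ≠ 0 → ‖w‖ ≤ K →
      ‖∫ x, h x / (w - (‖x‖ : ℂ) ^ 2) ∂μ‖ ≤ C * M * (1 + |Real.log ‖w‖|) := by
  have : Nontrivial E := finrank_pos_iff.1 (two_pos.trans_le hE)
  obtain ⟨k, hk⟩ := Nat.exists_eq_add_of_le' hE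
  set D := (k * R ^ (k - 1) + R ^ k) * (R * (K + R ^ 2 + π) + 2 * ∫ u : ℝ, log⁺ u⁻¹)
  refine ⟨(π + D) * μ.toSphere.real univ, fun {h M w} hh hw hwK => ?_⟩
  have hM := hh.nonneg
  have hD : 0 ≤ D := by
    have : 0 ≤ K := (norm_nonneg w).trans hwK
    have : 0 ≤ ∫ u : ℝ, log⁺ u⁻¹ := integral_nonneg fun _ => posLog_nonneg
    positivity
  have hray (v : E) (hv : ‖v‖ = 1) :
      ‖∫ t in Ioi (0 : ℝ), t ^ (finrank ℝ E - 1) • ((h (t • v) : ℂ) / (w - (‖t • v‖ : ℂ) ^ 2))‖ ≤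
        (π + D) * M * (1 + |Real.log ‖w‖|) := by
    rw [hk, show k + 2 - 1 = k + 1 from rfl]
    calc _ ≤ (M * (|Real.log ‖w‖| + π) + (k * R ^ (k - 1) + R ^ k) * M *
          (R * (K + R ^ 2 + π) + 2 * ∫ u : ℝ, log⁺ u⁻¹)) / 2 :=
          (hh.norm_integral_ray_le hR k hv hw).trans (by gcongr)
      _ = M * ((|Real.log ‖w‖| + π) + D) / 2 := by ring
      _ ≤ M * ((π + D) * (1 + |Real.log ‖w‖|)) := by
          have hlog : |Real.log ‖w‖| ≤ (π + D) * |Real.log ‖w‖| :=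
            le_mul_of_one_le_left (abs_nonneg _) (by linarith [pi_gt_three])
          rw [mul_div_assoc]
          gcongr M * ?_
          linarith [abs_nonneg (Real.log ‖w‖), pi_pos]
      _ = (π + D) * M * (1 + |Real.log ‖w‖|) := by ring
  have hint : Integrable (fun x => h x / (w - (‖x‖ : ℂ) ^ 2)) μ :=
    hh.integrable_div μ (by fun_prop) fun x => slitPlane_ne_zero (sub_sq_mem_slitPlane hw ‖x‖)
  calc _ ≤ (π + D) * M * (1 + |Real.log ‖w‖|) * μ.toSphere.real univ :=
        norm_integral_le_toSphere_of_forall_ray μ hint hray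
    _ = (π + D) * μ.toSphere.real univ * M * (1 + |Real.log ‖w‖|) := by ring

end Elliptic

section Hyperbolic

variable {E F : Type*} [NormedAddCommGroup E] [NormedSpace ℝ E] [FiniteDimensional ℝ E]
  [MeasurableSpace E] [NormedAddCommGroup F] [NormedSpace ℝ F] [FiniteDimensional ℝ F]
  [MeasurableSpace F] (μ : Measure E) (ν : Measure F) [μ.IsAddHaarMeasure] [ν.IsAddHaarMeasure]
  {R : ℝ}

theorem norm_integral_le_of_le_norm {M : ℝ} {f : E × F → ℝ} {z : ℂ} (hf : IsC1Bump R M f)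
    (hz : 1 + R ^ 2 ≤ ‖z‖) :
    ‖∫ q, f q / (z - (‖q.1‖ : ℂ) ^ 2 + (‖q.2‖ : ℂ) ^ 2) ∂μ.prod ν‖ ≤
      M * (μ.prod ν).real (ball 0 R) := by
  have hden {q : E × F} (hq : q ∈ ball 0 R) :
      1 ≤ ‖z - (‖q.1‖ : ℂ) ^ 2 + (‖q.2‖ : ℂ) ^ 2‖ := by
    have hq : ‖q.1‖ < R ∧ ‖q.2‖ < R := max_lt_iff.1 (mem_ball_zero_iff.1 hq)
    have hquad : ‖(‖q.1‖ : ℂ) ^ 2 - (‖q.2‖ : ℂ) ^ 2‖ ≤ R ^ 2 := by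
      rw [← ofReal_pow, ← ofReal_pow, ← ofReal_sub, Complex.norm_real, norm_eq_abs]
      refine abs_sub_le_of_nonneg_of_le (by positivity) ?_ (by positivity) ?_ <;> gcongr
      exacts [hq.1.le, hq.2.le]
    have := norm_sub_norm_le z ((‖q.1‖ : ℂ) ^ 2 - (‖q.2‖ : ℂ) ^ 2)
    rw [sub_add]
    linarith
  rw [← setIntegral_eq_integral_of_forall_compl_eq_zero (s := ball (0 : E × F) R) fun q hq => ?_]
  · refine norm_setIntegral_le_of_norm_le_const measure_ball_lt_top fun q hq => ?_
    rw [norm_div, Complex.norm_real, norm_eq_abs]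
    exact (div_le_self (abs_nonneg _) (hden hq)).trans (hf.abs_le q)
  · rw [hf.eq_zero (not_lt.1 (mem_ball_zero_iff.not.1 hq)), ofReal_zero, zero_div]

variable [BorelSpace E] [BorelSpace F]

theorem integrable_div_sub_add_norm_sq {M : ℝ} {f : E × F → ℝ} {z : ℂ} (hf : IsC1Bump R M f)
    (hz : z.im ≠ 0) :
    Integrable (fun q => f q / (z - (‖q.1‖ : ℂ) ^ 2 + (‖q.2‖ : ℂ) ^ 2)) (μ.prod ν) :=
  hf.integrable_div _ (by fun_prop) fun q hq => hz <| by
    simpa [← ofReal_pow] using congrArg Complex.im hq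

theorem norm_integral_le_setIntegral_ball {M : ℝ} {f : E × F → ℝ} {z : ℂ} (hf : IsC1Bump R M f)
    (hz : z.im ≠ 0) {φ : F → ℝ} (hφ : IntegrableOn φ (ball 0 R) ν)
    (hle : ∀ y ∈ ball (0 : F) R,
      ‖∫ x, f (x, y) / (z + (‖y‖ : ℂ) ^ 2 - (‖x‖ : ℂ) ^ 2) ∂μ‖ ≤ φ y) :
    ‖∫ q, f q / (z - (‖q.1‖ : ℂ) ^ 2 + (‖q.2‖ : ℂ) ^ 2) ∂μ.prod ν‖ ≤ ∫ y in ball 0 R, φ y ∂ν := by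
  set I : F → ℂ := fun y => ∫ x, f (x, y) / (z + (‖y‖ : ℂ) ^ 2 - (‖x‖ : ℂ) ^ 2) ∂μ
  have hI : ∀ y ∉ ball (0 : F) R, I y = 0 := fun y hy => by
    rw [mem_ball_zero_iff, not_lt] at hy
    have hf0 (x : E) : f (x, y) = 0 := hf.eq_zero (hy.trans (le_max_right ‖x‖ ‖y‖))
    simp only [I, hf0, ofReal_zero, zero_div, integral_zero]
  have hfubini : ∫ q, f q / (z - (‖q.1‖ : ℂ) ^ 2 + (‖q.2‖ : ℂ) ^ 2) ∂μ.prod ν =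
      ∫ y in ball 0 R, I y ∂ν := by
    rw [integral_prod_symm _ (hf.integrable_div_sub_add_norm_sq μ ν hz),
      setIntegral_eq_integral_of_forall_compl_eq_zero hI]
    simp only [I, sub_add_eq_add_sub]
  rw [hfubini]
  exact norm_integral_le_of_norm_le hφ ((ae_restrict_mem measurableSet_ball).mono hle)

theorem exists_norm_integral_le_of_norm_le [Nontrivial F] (hE : 2 ≤ finrank ℝ E) (hR : 0 ≤ R)
    (K : ℝ) :
    ∃ C, ∀ {f : E × F → ℝ} {M : ℝ} {z : ℂ}, IsC1Bump R M f → z.im ≠ 0 → ‖z‖ ≤ K →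
      ‖∫ q, f q / (z - (‖q.1‖ : ℂ) ^ 2 + (‖q.2‖ : ℂ) ^ 2) ∂μ.prod ν‖ ≤ C * M := by
  obtain ⟨C, hC⟩ := exists_norm_integral_div_sub_norm_sq_le μ hE hR (K + R ^ 2)
  set A := finrank ℝ F * ν.real (ball 0 1) * R ^ (finrank ℝ F - 1)
  refine ⟨|C| * (ν.real (ball 0 R) + A * (R * (K + R ^ 2) + 2 * ∫ u : ℝ, log⁺ u⁻¹)),
    fun {f M z} hf hz hzK => ?_⟩
  have hM := hf.nonneg
  have hlog := integrableOn_ball_abs_log_norm_add_norm_sq ν hz R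
  have hone : IntegrableOn (fun _ : F => (1 : ℝ)) (ball 0 R) ν :=
    integrableOn_const measure_ball_lt_top.ne
  have hslice : ∀ y ∈ ball (0 : F) R, ‖∫ x, f (x, y) / (z + (‖y‖ : ℂ) ^ 2 - (‖x‖ : ℂ) ^ 2) ∂μ‖ ≤
      |C| * M * (1 + |Real.log ‖z + (‖y‖ : ℂ) ^ 2‖|) := fun y hy => by
    have him : (z + (‖y‖ : ℂ) ^ 2).im ≠ 0 := by simpa [← ofReal_pow] using hz
    have hnorm : ‖z + (‖y‖ : ℂ) ^ 2‖ ≤ K + R ^ 2 := by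
      refine (norm_add_le _ _).trans (add_le_add hzK ?_)
      rw [norm_pow, Complex.norm_of_nonneg (norm_nonneg y)]
      exact pow_le_pow_left₀ (norm_nonneg y) (mem_ball_zero_iff.1 hy).le 2
    exact (hC (hf.slice y) him hnorm).trans (by gcongr; exact le_abs_self C)
  calc ‖∫ q, f q / (z - (‖q.1‖ : ℂ) ^ 2 + (‖q.2‖ : ℂ) ^ 2) ∂μ.prod ν‖
      ≤ ∫ y in ball 0 R, |C| * M * (1 + |Real.log ‖z + (‖y‖ : ℂ) ^ 2‖|) ∂ν :=
        hf.norm_integral_le_setIntegral_ball μ ν hz ((Integrable.add hone hlog).const_mul _) hslice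
    _ = |C| * M * (ν.real (ball 0 R) + ∫ y in ball 0 R, |Real.log ‖z + (‖y‖ : ℂ) ^ 2‖| ∂ν) := by
        rw [integral_const_mul, integral_add hone hlog, setIntegral_const, smul_eq_mul, mul_one]
    _ ≤ |C| * M * (ν.real (ball 0 R) + A * (R * (K + R ^ 2) + 2 * ∫ u : ℝ, log⁺ u⁻¹)) := by
        gcongr
        exact (setIntegral_ball_abs_log_norm_add_norm_sq_le ν hz hR).trans (by gcongr)
    _ = _ := by ring

theorem exists_norm_integral_le_of_two_le_finrank [Nontrivial F] (hE : 2 ≤ finrank ℝ E)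
    (hR : 0 ≤ R) :
    ∃ C, ∀ {f : E × F → ℝ} {M : ℝ} {z : ℂ}, IsC1Bump R M f → z.im ≠ 0 →
      ‖∫ q, f q / (z - (‖q.1‖ : ℂ) ^ 2 + (‖q.2‖ : ℂ) ^ 2) ∂μ.prod ν‖ ≤ C * M := by
  obtain ⟨C, hC⟩ := exists_norm_integral_le_of_norm_le μ ν hE hR (1 + R ^ 2)
  refine ⟨max C ((μ.prod ν).real (ball 0 R)), fun {f M z} hf hz => ?_⟩
  have hM := hf.nonneg
  rcases le_total ‖z‖ (1 + R ^ 2) with hsmall | hlarge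
  · exact (hC hf hz hsmall).trans (by gcongr; exact le_max_left _ _)
  · rw [mul_comm]
    exact (hf.norm_integral_le_of_le_norm μ ν hlarge).trans (by gcongr; exact le_max_right _ _)

theorem exists_norm_integral_le [Nontrivial E] [Nontrivial F]
    (hEF : 3 ≤ finrank ℝ E + finrank ℝ F) (hR : 0 ≤ R) :
    ∃ C, ∀ {f : E × F → ℝ} {M : ℝ} {z : ℂ}, IsC1Bump R M f → z.im ≠ 0 →
      ‖∫ q, f q / (z - (‖q.1‖ : ℂ) ^ 2 + (‖q.2‖ : ℂ) ^ 2) ∂μ.prod ν‖ ≤ C * M := by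
  rcases le_or_gt 2 (finrank ℝ E) with hE | hE
  · exact exists_norm_integral_le_of_two_le_finrank μ ν hE hR
  obtain ⟨C, hC⟩ :=
    exists_norm_integral_le_of_two_le_finrank (R := R) ν μ (by omega) hR
  refine ⟨C, fun {f M z} hf hz => ?_⟩
  have hswap : ∫ q, f q / (z - (‖q.1‖ : ℂ) ^ 2 + (‖q.2‖ : ℂ) ^ 2) ∂μ.prod ν =
      -∫ q, f q.swap / (-z - (‖q.1‖ : ℂ) ^ 2 + (‖q.2‖ : ℂ) ^ 2) ∂ν.prod μ := by
    rw [← integral_prod_swap, ← integral_neg]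
    refine integral_congr_ae (.of_forall fun q => ?_)
    simp only [Prod.fst_swap, Prod.snd_swap, ← div_neg]
    congr 1
    ring
  rw [hswap, norm_neg]
  exact hC hf.swap (by simpa using hz)

end Hyperbolic

end IsC1Bump

section Basis

variable {E F ι κ : Type*} [NormedAddCommGroup E] [NormedSpace ℝ E] [NormedAddCommGroup F]
  [NormedSpace ℝ F] [Finite ι] [Finite κ]

theorem exists_isC1Bump_of_basis (bE : Basis ι ℝ E) (bF : Basis κ ℝ F) :
    ∃ C, ∀ {f : E × F → ℝ} {R M : ℝ}, ContDiff ℝ 1 f →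
      Function.support f ⊆ ball 0 R ×ˢ ball 0 R → (∀ q, |f q| ≤ M) →
      (∀ q i, |fderiv ℝ f q (bE i, 0)| ≤ M) → (∀ q j, |fderiv ℝ f q (0, bF j)| ≤ M) →
      IsC1Bump R (C * M) f := by
  obtain ⟨C, -, hC⟩ := (bE.prod bF).exists_opNorm_le (F := ℝ)
  refine ⟨max 1 C, fun {f R M} hf hsupp hfM hE hF => ?_⟩
  have hM : 0 ≤ M := (abs_nonneg _).trans (hfM 0)
  refine ⟨hf, ?_, fun q => ?_, fun q => ?_⟩
  · rwa [ball_prod_same] at hsupp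
  · exact (hfM q).trans (le_mul_of_one_le_left hM (le_max_left _ _))
  · refine (hC hM ?_).trans (mul_le_mul_of_nonneg_right (le_max_right _ _) hM)
    rintro (i | j)
    · simpa using hE q i
    · simpa using hF q j

theorem statement18_general [MeasurableSpace E] [BorelSpace E] [MeasurableSpace F] [BorelSpace F]
    [Nontrivial E] [Nontrivial F] (bE : Basis ι ℝ E) (bF : Basis κ ℝ F) (μ : Measure E)
    (ν : Measure F) [μ.IsAddHaarMeasure] [ν.IsAddHaarMeasure]
    (hEF : 3 ≤ finrank ℝ E + finrank ℝ F) {R : ℝ} (hR : 0 ≤ R) :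
    ∃ c, ∀ {f : E × F → ℝ} {M : ℝ} {z : ℂ}, z.im ≠ 0 → ContDiff ℝ 1 f →
      Function.support f ⊆ ball 0 R ×ˢ ball 0 R → (∀ q, |f q| ≤ M) →
      (∀ q i, |fderiv ℝ f q (bE i, 0)| ≤ M) → (∀ q j, |fderiv ℝ f q (0, bF j)| ≤ M) →
      ‖∫ q in ball 0 R ×ˢ ball 0 R, f q / (z - (‖q.1‖ : ℂ) ^ 2 + (‖q.2‖ : ℂ) ^ 2) ∂μ.prod ν‖ ≤
        c * M := by
  have := bE.finiteDimensional_of_finite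
  have := bF.finiteDimensional_of_finite
  obtain ⟨C, hC⟩ := exists_isC1Bump_of_basis bE bF
  obtain ⟨c, hc⟩ := IsC1Bump.exists_norm_integral_le μ ν hEF hR
  refine ⟨c * C, fun {f M z} hz hf hsupp hfM hE hF => ?_⟩
  have hbump := hC hf hsupp hfM hE hF
  rw [mul_assoc, ball_prod_same, setIntegral_eq_integral_of_forall_compl_eq_zero fun q hq => ?_]
  · exact hc hbump hz
  · rw [hbump.eq_zero (not_lt.1 (mem_ball_zero_iff.not.1 hq)), ofReal_zero, zero_div]

end Basis

/-- Lemma 3: hyperbolic van Hove singularity.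
For `d ≥ 3`, `1 ≤ m ≤ d-1` and `0 < r < 1` there is `C < ∞`, depending only on `d`,
`m` and `r`, such that for every `C¹` function `f` with compact support in
`B_{d-m} × B_m` and `‖f‖_{C¹} ≤ M`, every `a ∈ ℝ` and every `b ≠ 0`:
`|∬ f(x,y)/(a + ib - |x|² + |y|²) dx dy| ≤ C M (1 + a² + b²)`. -/
theorem statement18 (d m : ℕ) (hd : 3 ≤ d) (hm1 : 1 ≤ m) (hm2 : m ≤ d - 1)
    (r : ℝ) (hr0 : 0 < r) (hr1 : r < 1) :
    ∃ c : ℝ,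
      ∀ (f : EuclideanSpace ℝ (Fin (d - m)) × EuclideanSpace ℝ (Fin m) → ℝ)
        (M : ℝ) (a b : ℝ), b ≠ 0 →
      ContDiff ℝ 1 f →
      tsupport f ⊆
        Metric.ball (0 : EuclideanSpace ℝ (Fin (d - m))) r ×ˢ
          Metric.ball (0 : EuclideanSpace ℝ (Fin m)) r →
      (∀ q, |f q| ≤ M) →
      (∀ (q : EuclideanSpace ℝ (Fin (d - m)) × EuclideanSpace ℝ (Fin m)) (i : Fin (d - m)),
        |fderiv ℝ f q (EuclideanSpace.single i 1, 0)| ≤ M) →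
      (∀ (q : EuclideanSpace ℝ (Fin (d - m)) × EuclideanSpace ℝ (Fin m)) (j : Fin m),
        |fderiv ℝ f q (0, EuclideanSpace.single j 1)| ≤ M) →
      ‖∫ q in Metric.ball (0 : EuclideanSpace ℝ (Fin (d - m))) r ×ˢ
            Metric.ball (0 : EuclideanSpace ℝ (Fin m)) r,
          (f q : ℂ) /
            ((a : ℂ) + Complex.I * (b : ℂ) - ((‖q.1‖ ^ 2 : ℝ) : ℂ) + ((‖q.2‖ ^ 2 : ℝ) : ℂ))‖ ≤
        c * M * (1 + a ^ 2 + b ^ 2) := by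
  have : Nonempty (Fin m) := ⟨⟨0, hm1⟩⟩
  have : Nonempty (Fin (d - m)) := ⟨⟨0, by omega⟩⟩
  obtain ⟨c, hc⟩ := statement18_general (EuclideanSpace.basisFun (Fin (d - m)) ℝ).toBasis
    (EuclideanSpace.basisFun (Fin m) ℝ).toBasis volume volume (by simp; omega) hr0.le
  refine ⟨c, fun f M a b hb hf hsupp hfM hE hF => ?_⟩
  have hbound := hc (z := a + I * b) (by simpa using hb) hf ((subset_tsupport f).trans hsupp) hfM
    (by simpa using hE) (by simpa using hF)
  have hcM : 0 ≤ c * M := (norm_nonneg _).trans hbound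
  push_cast
  exact hbound.trans (le_mul_of_one_le_right hcM (by nlinarith [sq_nonneg a, sq_nonneg b]))

end LatSch
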